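/- Let G be a graph on n vertices with adjacency matrix A and stability number α(G), and let k > 0 be a noninteger real scalar. Then the quadratic form q_{A,k}(x) := x^T (kA + kI - J) x has a local minimizer over the nonnegative orthant {x ∈ ℝ^n : x ≥ 0} if and only if α(G) < k. -/

import Mathlib

open Matrix
open scoped RealInnerProductSpace

/-- The stability (independence) number of a graph: the size of the largest set of
pairwise non-adjacent vertices. -/
noncomputable def stabilityNumber {V : Type*} (G : SimpleGraph V) : ℕ :=
  sSup {k | ∃ s : Finset V, s.card = k ∧ ∀ i ∈ s, ∀ j ∈ s, i ≠ j → ¬ G.Adj i j}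

/-- The matrix `M_{A,k} = k A + k I - J`, where `J` is the all-ones matrix. -/
noncomputable def MAk {n : ℕ} (A : Matrix (Fin n) (Fin n) ℝ) (k : ℝ) : Matrix (Fin n) (Fin n) ℝ :=
  k • A + k • (1 : Matrix (Fin n) (Fin n) ℝ) - Matrix.of (fun _ _ => (1 : ℝ))

/-- Entrywise square of a vector. -/
def vsq {n : ℕ} (x : Fin n → ℝ) : Fin n → ℝ := fun i => (x i) ^ 2

/-- A symmetric matrix `M` is copositive if `xᵀ M x ≥ 0` for all entrywise nonnegative `x`. -/
def Copositive {n : ℕ} (M : Matrix (Fin n) (Fin n) ℝ) : Prop :=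
  ∀ x : Fin n → ℝ, (∀ i, 0 ≤ x i) → 0 ≤ x ⬝ᵥ M.mulVec x

/-- The quartic form `p_M(x) = (x²)ᵀ M (x²)`. -/
noncomputable def quarticForm {n : ℕ} (M : Matrix (Fin n) (Fin n) ℝ) :
    EuclideanSpace ℝ (Fin n) → ℝ :=
  fun x => vsq x ⬝ᵥ M.mulVec (vsq x)

/-- The quadratic form `q_M(x) = xᵀ M x`. -/
noncomputable def quadForm {n : ℕ} (M : Matrix (Fin n) (Fin n) ℝ) :
    EuclideanSpace ℝ (Fin n) → ℝ :=
  fun x => x ⬝ᵥ M.mulVec x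

/-- `xm` is a local minimizer of `f` over `Ω`: `xm ∈ Ω` and there is `ε > 0` such that
`f xm ≤ f x` for all `x ∈ Ω` with `‖x - xm‖ ≤ ε` (Euclidean norm). -/
def IsLocalMinimizer {n : ℕ} (f : EuclideanSpace ℝ (Fin n) → ℝ)
    (Ω : Set (EuclideanSpace ℝ (Fin n))) (xm : EuclideanSpace ℝ (Fin n)) : Prop :=
  xm ∈ Ω ∧ ∃ ε > 0, ∀ x ∈ Ω, ‖x - xm‖ ≤ ε → f xm ≤ f x

/-- `xm` is a strict local minimizer of `f` over `Ω`: `xm ∈ Ω` and there is `ε > 0` such that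
`f xm < f x` for all `x ∈ Ω` with `x ≠ xm` and `‖x - xm‖ ≤ ε` (Euclidean norm). -/
def IsStrictLocalMinimizer {n : ℕ} (f : EuclideanSpace ℝ (Fin n) → ℝ)
    (Ω : Set (EuclideanSpace ℝ (Fin n))) (xm : EuclideanSpace ℝ (Fin n)) : Prop :=
  xm ∈ Ω ∧ ∃ ε > 0, ∀ x ∈ Ω, x ≠ xm → ‖x - xm‖ ≤ ε → f xm < f x

/-!
Put `B = A + I` and `q(x) = k xᵀBx - (∑ xᵢ)²`. Let `T` be a maximal stable subset of the support of
some `x ≥ 0`. Every vertex of the support lies in the closed neighbourhood of a vertex of `T`, so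
`∑ xᵢ ≤ ∑_{a ∈ T} (Bx)ₐ`. This single inequality drives both directions.

* A minimizer of `xᵀBx` over the simplex, with value `v`, satisfies `Bx = v` on its support; hence
  `1 ≤ |T| v ≤ α(G) v`. This is the Motzkin–Straus inequality `(∑ yᵢ)² ≤ α(G) yᵀBy` for `y ≥ 0`,
  so that `0` is a global minimizer of `q` when `α(G) < k`.
* A local minimizer `x ≠ 0` of `q` satisfies `kBx = ∑ xᵢ` on its support, so `k ≤ |T|`, while the
  second-order condition along the indicator vector of `T` gives `|T| ≤ k`: then `k` is an integer.
  So the only possible local minimizer is `0`, and there the second-order condition along the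
  indicator vector of a maximum stable set gives `α(G) ≤ k`.
-/

open Filter Topology

section OrthantMinimizers

variable {V : Type*} {x d : V → ℝ}

lemma tendsto_add_smul_nhdsWithin_Ici [Finite V] (hx : 0 ≤ x) (hd : ∀ i, x i = 0 → 0 ≤ d i) :
    Tendsto (fun t : ℝ ↦ x + t • d) (𝓝[>] 0) (𝓝[Set.Ici 0] x) := by
  refine tendsto_nhdsWithin_iff.2 ⟨?_, ?_⟩
  · have hc : Continuous fun t : ℝ ↦ x + t • d := by fun_prop
    simpa using (hc.tendsto 0).mono_left nhdsWithin_le_nhds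
  · simp only [Set.mem_Ici, Pi.le_def, eventually_all]
    intro i
    rcases (hx i).eq_or_lt with h0 | h0
    · filter_upwards [self_mem_nhdsWithin] with t ht
      simpa [← h0] using mul_nonneg (Set.mem_Ioi.1 ht).le (hd i h0.symm)
    · have hc : Continuous fun t : ℝ ↦ (x + t • d) i := by fun_prop
      have hpos : (0 : V → ℝ) i < (x + (0 : ℝ) • d) i := by simpa using h0
      exact ((hc.tendsto 0).eventually_const_lt hpos).filter_mono nhdsWithin_le_nhds
        |>.mono fun _ ↦ le_of_lt

variable [Fintype V] {M : Matrix V V ℝ}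

lemma dotProduct_mulVec_add_smul (hM : M.IsSymm) (x d : V → ℝ) (t : ℝ) :
    (x + t • d) ⬝ᵥ M *ᵥ (x + t • d) =
      x ⬝ᵥ M *ᵥ x + t * (2 * (d ⬝ᵥ M *ᵥ x) + t * (d ⬝ᵥ M *ᵥ d)) := by
  have hcomm : x ⬝ᵥ M *ᵥ d = d ⬝ᵥ M *ᵥ x := by
    rw [dotProduct_mulVec, dotProduct_comm, ← mulVec_transpose, hM.eq]
  simp only [mulVec_add, mulVec_smul, add_dotProduct, dotProduct_add, smul_dotProduct,
    dotProduct_smul, smul_eq_mul, hcomm]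
  ring

lemma eventually_nonneg_dotProduct_of_isLocalMinOn (hM : M.IsSymm) (hx : 0 ≤ x)
    (hmin : IsLocalMinOn (fun y ↦ y ⬝ᵥ M *ᵥ y) (Set.Ici 0) x) (hd : ∀ i, x i = 0 → 0 ≤ d i) :
    ∀ᶠ t : ℝ in 𝓝[>] 0, 0 ≤ 2 * (d ⬝ᵥ M *ᵥ x) + t * (d ⬝ᵥ M *ᵥ d) := by
  filter_upwards [(tendsto_add_smul_nhdsWithin_Ici hx hd).eventually hmin, self_mem_nhdsWithin]
    with t hle ht
  rw [dotProduct_mulVec_add_smul hM] at hle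
  exact nonneg_of_mul_nonneg_right (le_add_iff_nonneg_right _ |>.1 hle) ht

lemma dotProduct_mulVec_nonneg_of_isLocalMinOn (hM : M.IsSymm) (hx : 0 ≤ x)
    (hmin : IsLocalMinOn (fun y ↦ y ⬝ᵥ M *ᵥ y) (Set.Ici 0) x) (hd : ∀ i, x i = 0 → 0 ≤ d i) :
    0 ≤ d ⬝ᵥ M *ᵥ x := by
  have hc : Continuous fun t : ℝ ↦ 2 * (d ⬝ᵥ M *ᵥ x) + t * (d ⬝ᵥ M *ᵥ d) := by fun_prop
  have := ge_of_tendsto ((hc.tendsto 0).mono_left nhdsWithin_le_nhds)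
    (eventually_nonneg_dotProduct_of_isLocalMinOn hM hx hmin hd)
  linarith

lemma dotProduct_mulVec_self_nonneg_of_isLocalMinOn (hM : M.IsSymm) (hx : 0 ≤ x)
    (hmin : IsLocalMinOn (fun y ↦ y ⬝ᵥ M *ᵥ y) (Set.Ici 0) x) (hd : ∀ i, x i = 0 → 0 ≤ d i)
    (h0 : d ⬝ᵥ M *ᵥ x = 0) : 0 ≤ d ⬝ᵥ M *ᵥ d := by
  obtain ⟨t, hnonneg, ht⟩ :=
    ((eventually_nonneg_dotProduct_of_isLocalMinOn hM hx hmin hd).and self_mem_nhdsWithin).exists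
  rw [h0, mul_zero, zero_add] at hnonneg
  exact nonneg_of_mul_nonneg_right hnonneg ht

lemma mulVec_apply_eq_zero_of_isLocalMinOn (hM : M.IsSymm) (hx : 0 ≤ x)
    (hmin : IsLocalMinOn (fun y ↦ y ⬝ᵥ M *ᵥ y) (Set.Ici 0) x) {i : V} (hi : x i ≠ 0) :
    (M *ᵥ x) i = 0 := by
  classical
  have hfeasible (c : ℝ) (j : V) (hj : x j = 0) : 0 ≤ (Pi.single i c : V → ℝ) j := by
    rw [Pi.single_eq_of_ne (by rintro rfl; exact hi hj)]
  have hpos := dotProduct_mulVec_nonneg_of_isLocalMinOn hM hx hmin (hfeasible 1)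
  have hneg := dotProduct_mulVec_nonneg_of_isLocalMinOn hM hx hmin (hfeasible (-1))
  rw [single_dotProduct] at hpos hneg
  linarith

-- By homogeneity, minimizing over the simplex controls the form on the whole orthant.
lemma exists_mem_stdSimplex_mul_sq_sum_le [Nonempty V] (M : Matrix V V ℝ) :
    ∃ x ∈ stdSimplex ℝ V, ∀ y : V → ℝ, 0 ≤ y →
      (x ⬝ᵥ M *ᵥ x) * (∑ i, y i) ^ 2 ≤ y ⬝ᵥ M *ᵥ y := by
  classical
  obtain ⟨x, hx, hmin⟩ := (isCompact_stdSimplex ℝ V).exists_isMinOn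
    ⟨_, single_mem_stdSimplex ℝ (Classical.arbitrary V)⟩
    (f := fun y ↦ y ⬝ᵥ M *ᵥ y) (by fun_prop)
  refine ⟨x, hx, fun y hy ↦ ?_⟩
  rcases eq_or_ne y 0 with rfl | hy0
  · simp
  · set σ := ∑ i, y i
    have hpos : 0 < σ := Fintype.sum_pos (hy.lt_of_ne' hy0)
    have hmem : σ⁻¹ • y ∈ stdSimplex ℝ V :=
      ⟨fun i ↦ mul_nonneg (inv_nonneg.2 hpos.le) (hy i), by
        simpa only [Pi.smul_apply, smul_eq_mul, ← Finset.mul_sum] using inv_mul_cancel₀ hpos.ne'⟩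
    calc (x ⬝ᵥ M *ᵥ x) * σ ^ 2
        ≤ ((σ⁻¹ • y) ⬝ᵥ M *ᵥ (σ⁻¹ • y)) * σ ^ 2 :=
          mul_le_mul_of_nonneg_right (hmin hmem) (sq_nonneg σ)
      _ = y ⬝ᵥ M *ᵥ y := by
          simp only [mulVec_smul, smul_dotProduct, dotProduct_smul, smul_eq_mul]
          field_simp

lemma sub_smul_ones_mulVec (M : Matrix V V ℝ) (v : ℝ) (x : V → ℝ) (i : V) :
    ((M - v • of fun _ _ ↦ 1) *ᵥ x) i = (M *ᵥ x) i - v * ∑ j, x j := by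
  simp [mulVec, dotProduct, sub_mul, Finset.mul_sum]

lemma dotProduct_sub_smul_ones_mulVec (M : Matrix V V ℝ) (v : ℝ) (x : V → ℝ) :
    x ⬝ᵥ (M - v • of fun _ _ ↦ 1) *ᵥ x = x ⬝ᵥ M *ᵥ x - v * (∑ i, x i) ^ 2 := by
  simp only [dotProduct, sub_smul_ones_mulVec, mul_sub, Finset.sum_sub_distrib, ← Finset.sum_mul]
  ring

lemma indicator_one_dotProduct (s : Finset V) (y : V → ℝ) :
    (s : Set V).indicator 1 ⬝ᵥ y = ∑ i ∈ s, y i := by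
  classical
  simp [dotProduct, Set.indicator_apply]

end OrthantMinimizers

section StableSets

variable {V : Type*} (G : SimpleGraph V)

lemma exists_isIndepSet_subset_dominating (s : Finset V) :
    ∃ T ⊆ s, G.IsIndepSet T ∧ ∀ j ∈ s, ∃ a ∈ T, a = j ∨ G.Adj a j := by
  classical
  let P : Set (Finset V) := {T | T ⊆ s ∧ G.IsIndepSet T}
  have hfin : P.Finite := s.powerset.finite_toSet.subset fun T hT ↦ by simpa using hT.1
  have hempty : ∅ ∈ P := by simp [P, SimpleGraph.IsIndepSet]
  obtain ⟨T, -, ⟨hTs, hT⟩, hmax⟩ := hfin.exists_le_maximal hempty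
  refine ⟨T, hTs, hT, fun j hj ↦ ?_⟩
  by_contra! hfar
  have hinsert : insert j T ∈ P := by
    refine ⟨Finset.insert_subset hj hTs, ?_⟩
    rw [Finset.coe_insert, SimpleGraph.IsIndepSet, Set.pairwise_insert]
    exact ⟨hT, fun a ha _ ↦ ⟨fun h ↦ (hfar a ha).2 h.symm, (hfar a ha).2⟩⟩
  exact (hfar j (hmax hinsert (Finset.subset_insert j T) (Finset.mem_insert_self j T))).1 rfl

lemma stabilityNumber_eq_indepNum : stabilityNumber G = G.indepNum := by
  simp [stabilityNumber, SimpleGraph.indepNum, SimpleGraph.isNIndepSet_iff,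
    SimpleGraph.isIndepSet_iff, Set.Pairwise, and_comm]

variable [DecidableEq V] [DecidableRel G.Adj]

/-- The matrix `A + I`, whose rows are the indicator vectors of the closed neighbourhoods. -/
def closedAdjMatrix : Matrix V V ℝ := G.adjMatrix ℝ + 1

lemma closedAdjMatrix_isSymm : (closedAdjMatrix G).IsSymm :=
  G.isSymm_adjMatrix.add isSymm_one

lemma closedAdjMatrix_nonneg (i j : V) : 0 ≤ closedAdjMatrix G i j := by
  simp only [closedAdjMatrix, Matrix.add_apply, SimpleGraph.adjMatrix_apply, one_apply]
  split_ifs <;> norm_num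

/-- The matrix `kA + kI - J` over an arbitrary vertex type; on `Fin n` it is `MAk`. -/
def stabilityMatrix (k : ℝ) : Matrix V V ℝ := k • closedAdjMatrix G - of fun _ _ ↦ 1

lemma stabilityMatrix_isSymm (k : ℝ) : (stabilityMatrix G k).IsSymm :=
  ((closedAdjMatrix_isSymm G).smul k).sub (.ext fun _ _ ↦ rfl)

variable [Fintype V]

lemma stabilityMatrix_mulVec (k : ℝ) (x : V → ℝ) (i : V) :
    (stabilityMatrix G k *ᵥ x) i = k * (closedAdjMatrix G *ᵥ x) i - ∑ j, x j := by
  simpa [stabilityMatrix, smul_mulVec] using sub_smul_ones_mulVec (k • closedAdjMatrix G) 1 x i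

lemma dotProduct_stabilityMatrix_mulVec (k : ℝ) (x : V → ℝ) :
    x ⬝ᵥ stabilityMatrix G k *ᵥ x = k * (x ⬝ᵥ closedAdjMatrix G *ᵥ x) - (∑ i, x i) ^ 2 := by
  simpa [stabilityMatrix, smul_mulVec] using
    dotProduct_sub_smul_ones_mulVec (k • closedAdjMatrix G) 1 x

lemma dotProduct_closedAdjMatrix_mulVec_nonneg {x : V → ℝ} (hx : 0 ≤ x) :
    0 ≤ x ⬝ᵥ closedAdjMatrix G *ᵥ x :=
  dotProduct_nonneg_of_nonneg hx fun i ↦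
    dotProduct_nonneg_of_nonneg (fun j ↦ closedAdjMatrix_nonneg G i j) hx

lemma exists_isIndepSet_sum_le_sum_mulVec {x : V → ℝ} (hx : 0 ≤ x) :
    ∃ T : Finset V, G.IsIndepSet T ∧ (∀ a ∈ T, x a ≠ 0) ∧
      ∑ i, x i ≤ ∑ a ∈ T, (closedAdjMatrix G *ᵥ x) a := by
  obtain ⟨T, hTs, hT, hdom⟩ := exists_isIndepSet_subset_dominating G {i | x i ≠ 0}
  refine ⟨T, hT, fun a ha ↦ by simpa using hTs ha, ?_⟩
  simp only [mulVec, dotProduct]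
  rw [Finset.sum_comm]
  refine Finset.sum_le_sum fun j _ ↦ ?_
  have hterm (a : V) : 0 ≤ closedAdjMatrix G a j * x j :=
    mul_nonneg (closedAdjMatrix_nonneg G a j) (hx j)
  by_cases hj : x j = 0
  · simp [hj]
  obtain ⟨a, haT, ha⟩ := hdom j (by simpa using hj)
  calc x j = closedAdjMatrix G a j * x j := by
        rcases ha with rfl | ha
        · simp [closedAdjMatrix]
        · simp [closedAdjMatrix, ha, ha.ne]
    _ ≤ ∑ a ∈ T, closedAdjMatrix G a j * x j :=
        Finset.single_le_sum (f := fun a ↦ closedAdjMatrix G a j * x j) (fun a _ ↦ hterm a) haT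

/-- The **Motzkin–Straus inequality**. -/
theorem sq_sum_le_indepNum_mul_dotProduct {y : V → ℝ} (hy : 0 ≤ y) :
    (∑ i, y i) ^ 2 ≤ G.indepNum * (y ⬝ᵥ closedAdjMatrix G *ᵥ y) := by
  rcases isEmpty_or_nonempty V with _ | _
  · simp
  set B := closedAdjMatrix G
  obtain ⟨x, ⟨hx, hx1⟩, hle⟩ := exists_mem_stdSimplex_mul_sq_sum_le B
  set v := x ⬝ᵥ B *ᵥ x with hv
  have hmin : IsMinOn (fun y ↦ y ⬝ᵥ (B - v • of fun _ _ ↦ 1) *ᵥ y) (Set.Ici 0) x := by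
    intro y hy
    simp only [Set.mem_ofPred_eq, dotProduct_sub_smul_ones_mulVec, hx1, ← hv]
    linarith [hle y hy]
  have hsymm : (B - v • of fun _ _ ↦ (1 : ℝ)).IsSymm :=
    (closedAdjMatrix_isSymm G).sub (.ext fun _ _ ↦ rfl)
  have hB (a : V) (ha : x a ≠ 0) : (B *ᵥ x) a = v := by
    have := mulVec_apply_eq_zero_of_isLocalMinOn hsymm hx hmin.localize ha
    rw [sub_smul_ones_mulVec, hx1] at this
    linarith
  have hv0 : 0 ≤ v := dotProduct_closedAdjMatrix_mulVec_nonneg G hx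
  obtain ⟨T, hT, hTx, hsum⟩ := exists_isIndepSet_sum_le_sum_mulVec G hx
  have hαv : 1 ≤ G.indepNum * v := by
    calc (1 : ℝ) ≤ ∑ a ∈ T, (B *ᵥ x) a := hx1 ▸ hsum
      _ = T.card * v := by
          rw [Finset.sum_congr rfl fun a ha ↦ hB a (hTx a ha), Finset.sum_const, nsmul_eq_mul]
      _ ≤ G.indepNum * v := by
          gcongr
          exact hT.card_le_indepNum
  calc (∑ i, y i) ^ 2 ≤ G.indepNum * v * (∑ i, y i) ^ 2 :=
        le_mul_of_one_le_left (sq_nonneg _) hαv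
    _ ≤ G.indepNum * (y ⬝ᵥ B *ᵥ y) := by
        rw [mul_assoc]
        exact mul_le_mul_of_nonneg_left (hle y hy) (Nat.cast_nonneg _)

variable {G} {k : ℝ} {x : V → ℝ}

lemma isMinOn_zero_of_indepNum_le (hk : G.indepNum ≤ k) :
    IsMinOn (fun y ↦ y ⬝ᵥ stabilityMatrix G k *ᵥ y) (Set.Ici 0) 0 := by
  intro y hy
  have hB := dotProduct_closedAdjMatrix_mulVec_nonneg G hy
  have hα := sq_sum_le_indepNum_mul_dotProduct G hy
  simpa [dotProduct_stabilityMatrix_mulVec] using hα.trans (mul_le_mul_of_nonneg_right hk hB)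

lemma indicator_dotProduct_closedAdjMatrix_mulVec {s : Finset V} (hs : G.IsIndepSet s) :
    (s : Set V).indicator 1 ⬝ᵥ closedAdjMatrix G *ᵥ (s : Set V).indicator 1 = s.card := by
  have hrow (i : V) (hi : i ∈ s) : (closedAdjMatrix G *ᵥ (s : Set V).indicator 1) i = 1 := by
    rw [mulVec, dotProduct_comm, indicator_one_dotProduct, Finset.sum_eq_single_of_mem i hi]
    · simp [closedAdjMatrix]
    · intro j hj hji
      simp [closedAdjMatrix, hs hi hj hji.symm, hji.symm]
  rw [indicator_one_dotProduct, Finset.sum_congr rfl hrow]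
  simp

lemma card_le_of_isIndepSet_of_isLocalMinOn (hk : 0 ≤ k) (hx : 0 ≤ x)
    (hmin : IsLocalMinOn (fun y ↦ y ⬝ᵥ stabilityMatrix G k *ᵥ y) (Set.Ici 0) x)
    {s : Finset V} (hs : G.IsIndepSet s) (hcrit : ∀ i ∈ s, (stabilityMatrix G k *ᵥ x) i = 0) :
    s.card ≤ k := by
  have hsum : ∑ i, (s : Set V).indicator (1 : V → ℝ) i = s.card := by
    simpa [dotProduct_one] using indicator_one_dotProduct s 1
  have hnonneg := dotProduct_mulVec_self_nonneg_of_isLocalMinOn (stabilityMatrix_isSymm G k) hx hmin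
    (d := (s : Set V).indicator 1) (fun i _ ↦ Set.indicator_nonneg (fun _ _ ↦ zero_le_one) i)
    (by rw [indicator_one_dotProduct, Finset.sum_eq_zero hcrit])
  rw [dotProduct_stabilityMatrix_mulVec, indicator_dotProduct_closedAdjMatrix_mulVec hs, hsum]
    at hnonneg
  rcases s.card.eq_zero_or_pos with h0 | hpos
  · simpa [h0] using hk
  · have hpos : (0 : ℝ) < s.card := Nat.cast_pos.2 hpos
    exact le_of_mul_le_mul_right (by linarith) hpos

lemma eq_zero_of_isLocalMinOn (hk : 0 ≤ k) (hk' : ∀ m : ℕ, (m : ℝ) ≠ k) (hx : 0 ≤ x)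
    (hmin : IsLocalMinOn (fun y ↦ y ⬝ᵥ stabilityMatrix G k *ᵥ y) (Set.Ici 0) x) : x = 0 := by
  by_contra hne
  have hσ : 0 < ∑ i, x i := Fintype.sum_pos (hx.lt_of_ne' hne)
  obtain ⟨T, hT, hTx, hsum⟩ := exists_isIndepSet_sum_le_sum_mulVec G hx
  have hcrit (a : V) (ha : a ∈ T) : (stabilityMatrix G k *ᵥ x) a = 0 :=
    mulVec_apply_eq_zero_of_isLocalMinOn (stabilityMatrix_isSymm G k) hx hmin (hTx a ha)
  have hB (a : V) (ha : a ∈ T) : k * (closedAdjMatrix G *ᵥ x) a = ∑ i, x i :=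
    sub_eq_zero.1 (stabilityMatrix_mulVec G k x a ▸ hcrit a ha)
  have hle : k * ∑ i, x i ≤ T.card * ∑ i, x i :=
    calc k * ∑ i, x i ≤ k * ∑ a ∈ T, (closedAdjMatrix G *ᵥ x) a :=
          mul_le_mul_of_nonneg_left hsum hk
      _ = T.card * ∑ i, x i := by
          rw [Finset.mul_sum, Finset.sum_congr rfl hB, Finset.sum_const, nsmul_eq_mul]
  exact hk' T.card ((card_le_of_isIndepSet_of_isLocalMinOn hk hx hmin hT hcrit).antisymm
    (le_of_mul_le_mul_right hle hσ))

theorem qAk_has_localMinimizer_iff_general (hk : 0 ≤ k) (hk' : ∀ m : ℕ, (m : ℝ) ≠ k) :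
    (∃ x : V → ℝ, 0 ≤ x ∧ IsLocalMinOn (fun y ↦ y ⬝ᵥ stabilityMatrix G k *ᵥ y) (Set.Ici 0) x) ↔
      (G.indepNum : ℝ) < k := by
  constructor
  · rintro ⟨x, hx, hmin⟩
    obtain rfl := eq_zero_of_isLocalMinOn hk hk' hx hmin
    obtain ⟨s, hs, hcard⟩ := G.exists_isNIndepSet_indepNum
    have hle := card_le_of_isIndepSet_of_isLocalMinOn hk hx hmin hs (by simp)
    exact lt_of_le_of_ne (hcard ▸ hle) (hk' _)
  · exact fun hlt ↦ ⟨0, le_rfl, (isMinOn_zero_of_indepNum_le hlt.le).localize⟩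

end StableSets

section EuclideanOrthant

variable {n : ℕ}

lemma isLocalMinimizer_iff_isLocalMinOn {f : EuclideanSpace ℝ (Fin n) → ℝ}
    {Ω : Set (EuclideanSpace ℝ (Fin n))} {x : EuclideanSpace ℝ (Fin n)} :
    IsLocalMinimizer f Ω x ↔ x ∈ Ω ∧ IsLocalMinOn f Ω x := by
  rw [IsLocalMinimizer, IsLocalMinOn, IsMinFilter, eventually_nhdsWithin_iff,
    Metric.nhds_basis_closedBall.eventually_iff]
  simp only [Metric.mem_closedBall, dist_eq_norm]
  exact and_congr_right fun _ ↦ exists_congr fun ε ↦ and_congr_right fun _ ↦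
    forall_congr' fun _ ↦ ⟨fun h hy hΩ ↦ h hΩ hy, fun h hΩ hy ↦ h hy hΩ⟩

lemma exists_isLocalMinimizer_quadForm_iff (M : Matrix (Fin n) (Fin n) ℝ) :
    (∃ x, IsLocalMinimizer (quadForm M) {x : EuclideanSpace ℝ (Fin n) | ∀ i, 0 ≤ x i} x) ↔
      ∃ x : Fin n → ℝ, 0 ≤ x ∧ IsLocalMinOn (fun y ↦ y ⬝ᵥ M *ᵥ y) (Set.Ici 0) x := by
  simp only [isLocalMinimizer_iff_isLocalMinOn]
  constructor
  · rintro ⟨x, hx, hmin⟩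
    exact ⟨x.ofLp, hx, hmin.comp_continuousOn (g := WithLp.toLp 2) (s := Set.Ici 0)
      (fun _ hy ↦ hy) (PiLp.continuous_toLp 2 _).continuousOn hx⟩
  · rintro ⟨x, hx, hmin⟩
    exact ⟨WithLp.toLp 2 x, hx, hmin.comp_continuousOn (g := WithLp.ofLp)
      (fun _ hy ↦ hy) (PiLp.continuous_ofLp 2 _).continuousOn hx⟩

lemma MAk_adjMatrix (G : SimpleGraph (Fin n)) [DecidableRel G.Adj] (k : ℝ) :
    MAk (G.adjMatrix ℝ) k = stabilityMatrix G k := by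
  rw [MAk, stabilityMatrix, closedAdjMatrix, smul_add]

end EuclideanOrthant

/-- For `k > 0` noninteger, the quadratic form `q_{A,k}(x) = xᵀ(kA + kI - J)x` has a local
minimizer over the nonnegative orthant iff `α(G) < k`. -/
theorem qAk_has_localMinimizer_iff {n : ℕ} (G : SimpleGraph (Fin n)) [DecidableRel G.Adj]
    (k : ℝ) (hk : 0 < k) (hk' : ∀ m : ℤ, (m : ℝ) ≠ k) :
    (∃ xm, IsLocalMinimizer (quadForm (MAk (G.adjMatrix ℝ) k))
        {x : EuclideanSpace ℝ (Fin n) | ∀ i, 0 ≤ x i} xm) ↔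
      (stabilityNumber G : ℝ) < k := by
  rw [exists_isLocalMinimizer_quadForm_iff, MAk_adjMatrix, stabilityNumber_eq_indepNum]
  exact qAk_has_localMinimizer_iff_general hk.le fun m ↦ by exact_mod_cast hk' m
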